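/- Let α, β, ε be nonnegative real numbers with α·ε < 1. Then the series ∑_{i=1}^{∞} ( β · α^{2^{i-1}-1} · ε^{2^{i-1}} + α^{2^i - 1} · ε^{2^i} ) converges, and ε + ∑_{i=1}^{∞} ( β · α^{2^{i-1}-1} · ε^{2^{i-1}} + α^{2^i - 1} · ε^{2^i} ) = ε (1 + β) · ∑_{i=0}^{∞} (αε)^{2^i − 1} ≤ ε (1 + β) / (1 − αε). -/

import Mathlib

/- The series `∑_{i=1}^∞ (β α^{2^{i-1}-1} ε^{2^{i-1}} + α^{2^i-1} ε^{2^i})` is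
reindexed over `i : ℕ` (starting at 0) via `i ↦ i + 1`. -/
theorem statement9 (α β ε : ℝ) (hα : 0 ≤ α) (hβ : 0 ≤ β) (hε : 0 ≤ ε)
    (h : α * ε < 1) :
    Summable (fun i : ℕ =>
        β * α ^ (2 ^ i - 1) * ε ^ 2 ^ i + α ^ (2 ^ (i + 1) - 1) * ε ^ 2 ^ (i + 1)) ∧
      ε + (∑' i : ℕ,
          (β * α ^ (2 ^ i - 1) * ε ^ 2 ^ i + α ^ (2 ^ (i + 1) - 1) * ε ^ 2 ^ (i + 1))) =
        ε * (1 + β) * ∑' i : ℕ, (α * ε) ^ (2 ^ i - 1) ∧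
      ε * (1 + β) * (∑' i : ℕ, (α * ε) ^ (2 ^ i - 1)) ≤ ε * (1 + β) / (1 - α * ε) := by
  have hx : 0 ≤ α * ε := mul_nonneg hα hε
  have key : ∀ i : ℕ, α ^ (2 ^ i - 1) * ε ^ 2 ^ i = ε * (α * ε) ^ (2 ^ i - 1) := by
    intro i
    obtain ⟨m, hm⟩ : ∃ m, 2 ^ i = m + 1 := ⟨2 ^ i - 1, by
      have := Nat.one_le_two_pow (n := i)
      omega⟩
    rw [hm, Nat.add_sub_cancel, mul_pow, pow_succ]
    ring
  have hle : ∀ i : ℕ, (α * ε) ^ (2 ^ i - 1) ≤ (α * ε) ^ i := by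
    intro i
    apply pow_le_pow_of_le_one hx h.le
    have := Nat.lt_two_pow_self (n := i)
    omega
  have hg : Summable (fun i : ℕ => (α * ε) ^ i) := summable_geometric_of_lt_one hx h
  have hf : Summable (fun i : ℕ => (α * ε) ^ (2 ^ i - 1)) :=
    Summable.of_nonneg_of_le (fun i => pow_nonneg hx _) hle hg
  have hf1 : Summable (fun i : ℕ => (α * ε) ^ (2 ^ (i + 1) - 1)) :=
    (summable_nat_add_iff (f := fun i : ℕ => (α * ε) ^ (2 ^ i - 1)) 1).2 hf
  have hterm : (fun i : ℕ =>
      β * α ^ (2 ^ i - 1) * ε ^ 2 ^ i + α ^ (2 ^ (i + 1) - 1) * ε ^ 2 ^ (i + 1)) =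
      fun i : ℕ => β * ε * (α * ε) ^ (2 ^ i - 1) + ε * (α * ε) ^ (2 ^ (i + 1) - 1) := by
    funext i
    rw [mul_assoc, key, key, mul_assoc]
  rw [hterm]
  refine ⟨(hf.mul_left _).add (hf1.mul_left _), ?_, ?_⟩
  · rw [(hf.mul_left _).tsum_add (hf1.mul_left _), tsum_mul_left, tsum_mul_left]
    have h0 := hf.tsum_eq_zero_add
    simp only [pow_zero, Nat.sub_self] at h0
    linear_combination (-ε) * h0
  · rw [div_eq_mul_inv, ← tsum_geometric_of_lt_one hx h]
    exact mul_le_mul_of_nonneg_left (hf.tsum_le_tsum hle hg) (by positivity)
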